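/- arXiv:1905.09076 — 4 statements merged into one kernel-verified Lean document; each statement's English description precedes it below -/
import Mathlib

section
/- Suppose σ : ℝ → ℝ is globally Lipschitz with Lipschitz constant L_σ and σ(0) = 0, let 0 < T < ∞, and let a, b be measurable with ∫₀^T ‖a(·,t)‖_{L²(Y)} dt < ∞ and ∫₀^T ‖b(·,·,t)‖_{L²(Y×Y)} dt < ∞. If f₁, f₂ : [0,T] → L²(Y) are two continuous curves each satisfying the integral equation fᵢ(t) = fᵢ(0) + ∫₀^t σ( a(·,s) − ∫_Y b(·,z,s) fᵢ(s)(z) dz ) ds on [0,T], then for all t ∈ [0,T]: ‖f₁(t) − f₂(t)‖_{L²(Y)} ≤ exp( L_σ ∫₀^t ‖b(·,·,s)‖_{L²(Y×Y)} ds ) · ‖f₁(0) − f₂(0)‖_{L²(Y)}. In particular, if f₁(0) = f₂(0) then f₁(t) = f₂(t) for all t ∈ [0,T]. -/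
open MeasureTheory Filter Set

noncomputable section

/-- The restriction of Lebesgue measure on `ℝⁿ` to a measurable set `Y`. -/
abbrev μY {n : ℕ} (Y : Set (Fin n → ℝ)) : Measure (Fin n → ℝ) := volume.restrict Y

/-!
By Hölder's inequality the integral operator with kernel `b(s)` has norm at most `‖b(s)‖`, so the
velocities of two solutions differ by at most `L ‖b(s)‖ ‖f₁(s) - f₂(s)‖`, and the estimate is
Grönwall's inequality with rate `k = L ‖b(·)‖`. As `k` is only integrable, Grönwall is proved for
absolutely continuous functions: if `u ≤ U := C + ∫ k u`, then `exp(-∫ k) U` is absolutely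
continuous with derivative `exp(-∫ k) k (u - U) ≤ 0` almost everywhere, hence it does not increase.

Subtracting the two integral equations requires the velocities to be Bochner integrable. Their
measurability in time comes from a Carathéodory argument: the layer is measurable in `s` for fixed
`v` and Lipschitz in `v` for fixed `s`, and `L²` is separable.
-/

open scoped ENNReal NNReal

theorem absolutelyContinuousOnInterval_comp_of_locallyLipschitzOn {F Z : Type*}
    [SeminormedAddCommGroup F] [PseudoMetricSpace Z] {g : F → Z} {f : ℝ → F} {a b : ℝ}
    (hg : LocallyLipschitzOn (f '' uIcc a b) g) (hf : AbsolutelyContinuousOnInterval f a b) :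
    AbsolutelyContinuousOnInterval (g ∘ f) a b := by
  obtain ⟨K, hK⟩ :=
    hg.exists_lipschitzOnWith_of_compact (isCompact_uIcc.image_of_continuousOn hf.continuousOn)
  unfold AbsolutelyContinuousOnInterval at hf ⊢
  refine squeeze_zero' (.of_forall fun _ => Finset.sum_nonneg fun _ _ => dist_nonneg) ?_
    (by simpa only [mul_zero] using hf.const_mul (K : ℝ))
  rw [eventually_inf_principal]
  filter_upwards with I hI
  rw [Finset.mul_sum]
  gcongr with i hi
  exact hK.dist_le_mul _ (mem_image_of_mem f (hI.1 i hi).1) _ (mem_image_of_mem f (hI.1 i hi).2)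

theorem le_mul_exp_integral_of_le_add_integral_mul {a b C : ℝ} {u k : ℝ → ℝ} (hab : a ≤ b)
    (hk : IntervalIntegrable k volume a b)
    (hku : IntervalIntegrable (fun s => k s * u s) volume a b) (hk₀ : ∀ s ∈ Icc a b, 0 ≤ k s)
    (hu : ∀ t ∈ Icc a b, u t ≤ C + ∫ s in a..t, k s * u s) :
    u b ≤ C * Real.exp (∫ s in a..b, k s) := by
  set K : ℝ → ℝ := fun t => ∫ s in a..t, k s
  set U : ℝ → ℝ := fun t => C + ∫ s in a..t, k s * u s
  set W : ℝ → ℝ := fun t => Real.exp (-K t) * U t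
  have hW : AbsolutelyContinuousOnInterval W a b := by
    have hK := hk.absolutelyContinuousOnInterval_intervalIntegral left_mem_uIcc
    have hU := hku.absolutelyContinuousOnInterval_intervalIntegral left_mem_uIcc
    have hC : AbsolutelyContinuousOnInterval (fun _ => C) a b :=
      (LipschitzWith.const C).lipschitzOnWith.absolutelyContinuousOnInterval
    have hexp : AbsolutelyContinuousOnInterval (Real.exp ∘ fun t => -K t) a b :=
      absolutelyContinuousOnInterval_comp_of_locallyLipschitzOn
        Real.contDiff_exp.locallyLipschitz.locallyLipschitzOn hK.fun_neg
    exact hexp.fun_mul (hC.fun_add hU)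
  have hW' : ∀ᵐ t, t ∈ uIcc a b → deriv W t ≤ 0 := by
    filter_upwards [hk.ae_hasDerivAt_integral, hku.ae_hasDerivAt_integral] with t hKt hUt ht
    have hderiv : HasDerivAt W
        (Real.exp (-K t) * -k t * U t + Real.exp (-K t) * (k t * u t)) t :=
      (hKt ht a left_mem_uIcc).neg.exp.mul ((hUt ht a left_mem_uIcc).const_add C)
    rw [uIcc_of_le hab] at ht
    calc deriv W t = Real.exp (-K t) * k t * (u t - U t) := by rw [hderiv.deriv]; ring
      _ ≤ 0 := mul_nonpos_of_nonneg_of_nonpos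
          (mul_nonneg (Real.exp_pos _).le (hk₀ t ht)) (sub_nonpos.2 (hu t ht))
  have hWab : W b ≤ W a := by
    rw [← sub_nonpos, ← hW.integral_deriv_eq_sub, intervalIntegral.integral_of_le hab]
    refine setIntegral_nonpos_ae measurableSet_Ioc ?_
    filter_upwards [hW'] with t ht htab
    exact ht (Icc_subset_uIcc (Ioc_subset_Icc_self htab))
  calc u b ≤ U b := hu b (right_mem_Icc.2 hab)
    _ = W b * Real.exp (K b) := by simp [W, mul_right_comm, ← Real.exp_add]
    _ ≤ W a * Real.exp (K b) := by gcongr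
    _ = C * Real.exp (K b) := by simp [W, U, K]

theorem norm_le_exp_integral_mul_norm_of_eq_add_integral {E : Type*} [NormedAddCommGroup E]
    [NormedSpace ℝ E] {f g : ℝ → E} {k : ℝ → ℝ} {a b : ℝ} (hab : a ≤ b)
    (hg : IntervalIntegrable g volume a b) (hk : IntervalIntegrable k volume a b)
    (hk₀ : ∀ s ∈ Icc a b, 0 ≤ k s)
    (hgf : ∀ᵐ s, s ∈ Ioc a b → ‖g s‖ ≤ k s * ‖f s‖)
    (hf : ∀ t ∈ Icc a b, f t = f a + ∫ s in a..t, g s) :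
    ‖f b‖ ≤ Real.exp (∫ s in a..b, k s) * ‖f a‖ := by
  have hfc : ContinuousOn f (uIcc a b) := by
    refine ((continuousOn_const (c := f a)).add
      (intervalIntegral.continuousOn_primitive_interval' hg left_mem_uIcc)).congr ?_
    rwa [uIcc_of_le hab]
  have hkf : IntervalIntegrable (fun s => k s * ‖f s‖) volume a b :=
    hk.mul_continuousOn hfc.norm
  rw [mul_comm]
  refine le_mul_exp_integral_of_le_add_integral_mul hab hk hkf hk₀ fun t ht => ?_
  rw [hf t ht]
  refine (norm_add_le _ _).trans (add_le_add_right ?_ _)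
  refine intervalIntegral.norm_integral_le_of_norm_le ht.1 ?_
    (hkf.mono_set (uIcc_subset_uIcc_left (Icc_subset_uIcc ht)))
  filter_upwards [hgf] with s hs hst
  exact hs (Ioc_subset_Ioc_right ht.2 hst)

theorem norm_sub_le_exp_integral_mul_norm_sub_of_eq_add_integral {E : Type*} [NormedAddCommGroup E]
    [NormedSpace ℝ E] {f₁ f₂ g₁ g₂ : ℝ → E} {k : ℝ → ℝ} {a b t : ℝ} (ht : t ∈ Icc a b)
    (hg₁ : IntervalIntegrable g₁ volume a b) (hg₂ : IntervalIntegrable g₂ volume a b)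
    (hk : IntervalIntegrable k volume a b) (hk₀ : ∀ s ∈ Icc a b, 0 ≤ k s)
    (hgf : ∀ᵐ s, s ∈ Ioc a b → ‖g₁ s - g₂ s‖ ≤ k s * ‖f₁ s - f₂ s‖)
    (hf₁ : ∀ s ∈ Icc a b, f₁ s = f₁ a + ∫ r in a..s, g₁ r)
    (hf₂ : ∀ s ∈ Icc a b, f₂ s = f₂ a + ∫ r in a..s, g₂ r) :
    ‖f₁ t - f₂ t‖ ≤ Real.exp (∫ s in a..t, k s) * ‖f₁ a - f₂ a‖ := by
  have hsub : ∀ s ∈ Icc a b, uIcc a s ⊆ uIcc a b := fun s hs =>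
    uIcc_subset_uIcc_left (Icc_subset_uIcc hs)
  have hdiff : ∀ s ∈ Icc a b, (f₁ - f₂) s = (f₁ - f₂) a + ∫ r in a..s, (g₁ r - g₂ r) := by
    intro s hs
    rw [intervalIntegral.integral_sub (hg₁.mono_set (hsub s hs)) (hg₂.mono_set (hsub s hs)),
      Pi.sub_apply, Pi.sub_apply, hf₁ s hs, hf₂ s hs]
    abel
  exact norm_le_exp_integral_mul_norm_of_eq_add_integral ht.1
    ((hg₁.sub hg₂).mono_set (hsub t ht)) (hk.mono_set (hsub t ht))
    (fun s hs => hk₀ s (Icc_subset_Icc_right ht.2 hs))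
    (hgf.mono fun s h hs => h (Ioc_subset_Ioc_right ht.2 hs))
    fun s hs => hdiff s (Icc_subset_Icc_right ht.2 hs)

theorem measurable_of_measurable_dist {S M : Type*} [MeasurableSpace S] [PseudoMetricSpace M]
    [SecondCountableTopology M] [MeasurableSpace M] [BorelSpace M] {f : S → M}
    (hf : ∀ y, Measurable fun s => dist (f s) y) : Measurable f := by
  have hbasis : TopologicalSpace.IsTopologicalBasis {U : Set M | ∃ y r, U = Metric.ball y r} := by
    refine TopologicalSpace.isTopologicalBasis_of_isOpen_of_nhds ?_ fun y U hy hU => ?_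
    · rintro _ ⟨y, r, rfl⟩
      exact Metric.isOpen_ball
    · obtain ⟨r, hr, hrU⟩ := Metric.isOpen_iff.1 hU y hy
      exact ⟨_, ⟨y, r, rfl⟩, Metric.mem_ball_self hr, hrU⟩
  refine (measurable_generateFrom ?_).mono le_rfl
    ((BorelSpace.measurable_eq (α := M)).trans hbasis.borel_eq_generateFrom).le
  rintro _ ⟨y, r, rfl⟩
  exact hf y measurableSet_Iio

theorem memLp_top_restrict_of_continuousOn {M E : Type*} [TopologicalSpace M] [MeasurableSpace M]
    [OpensMeasurableSpace M] [NormedAddCommGroup E] {μ : Measure M} {s : Set M} {f : M → E}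
    (hs : IsCompact s) (hms : MeasurableSet s) (hf : ContinuousOn f s) :
    MemLp f ∞ (μ.restrict s) := by
  obtain ⟨C, hC⟩ := hs.exists_bound_of_continuousOn hf
  exact memLp_top_of_bound (hf.aestronglyMeasurable_of_isCompact hs hms) C
    (ae_restrict_of_forall_mem hms hC)

section Slices

variable {X Z E : Type*} [MeasurableSpace X] [MeasurableSpace Z]
  [NormedAddCommGroup E] {μ : Measure X} {ν : Measure Z} [SFinite ν] {p : ℝ≥0∞}

theorem measurable_eLpNorm_of_uncurry (hp₀ : p ≠ 0) (hp : p ≠ ∞) {h : X → Z → E}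
    (hh : StronglyMeasurable (Function.uncurry h)) : Measurable fun x => eLpNorm (h x) p ν := by
  simp_rw [eLpNorm_eq_lintegral_rpow_enorm_toReal hp₀ hp]
  exact (hh.enorm.pow_const _).lintegral_prod_right'.pow_const _

theorem aemeasurable_eLpNorm_of_uncurry (hp₀ : p ≠ 0) (hp : p ≠ ∞) {h : X → Z → E}
    (hh : AEStronglyMeasurable (Function.uncurry h) (μ.prod ν)) :
    AEMeasurable (fun x => eLpNorm (h x) p ν) μ := by
  simp_rw [eLpNorm_eq_lintegral_rpow_enorm_toReal hp₀ hp]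
  exact (hh.enorm.pow_const _).lintegral_prod_right'.pow_const _

theorem eLpNorm_eLpNorm_eq_eLpNorm_uncurry (hp₀ : p ≠ 0) (hp : p ≠ ∞) {h : X → Z → E}
    (hh : AEStronglyMeasurable (Function.uncurry h) (μ.prod ν)) :
    eLpNorm (fun x => eLpNorm (h x) p ν) p μ = eLpNorm (Function.uncurry h) p (μ.prod ν) := by
  have hp' : p.toReal ≠ 0 := (ENNReal.toReal_pos hp₀ hp).ne'
  simp only [eLpNorm_eq_lintegral_rpow_enorm_toReal hp₀ hp, enorm_eq_self, one_div,
    ENNReal.rpow_inv_rpow hp']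
  rw [lintegral_prod _ (hh.enorm.pow_const _)]
  rfl

theorem ae_memLp_of_memLp_uncurry (hp₀ : p ≠ 0) (hp : p ≠ ∞) {h : X → Z → E}
    (hh : MemLp (Function.uncurry h) p (μ.prod ν)) : ∀ᵐ x ∂μ, MemLp (h x) p ν := by
  have hfin : ∫⁻ x, eLpNorm (h x) p ν ^ p.toReal ∂μ ≠ ∞ := by
    have := (eLpNorm_lt_top_iff_lintegral_rpow_enorm_lt_top hp₀ hp).1
      ((eLpNorm_eLpNorm_eq_eLpNorm_uncurry hp₀ hp hh.1).trans_lt hh.2)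
    simpa using this.ne
  filter_upwards [hh.1.prodMk_left,
    ae_lt_top' ((aemeasurable_eLpNorm_of_uncurry hp₀ hp hh.1).pow_const _) hfin] with x hx hx'
  exact ⟨hx, (ENNReal.rpow_lt_top_iff_of_pos (ENNReal.toReal_pos hp₀ hp)).1 hx'⟩

theorem exists_forall_memLp_ae_eq (hp₀ : p ≠ 0) (hp : p ≠ ∞) {h : X → Z → E}
    (hh : StronglyMeasurable (Function.uncurry h)) (hLp : ∀ᵐ x ∂μ, MemLp (h x) p ν) :
    ∃ h' : X → Z → E, StronglyMeasurable (Function.uncurry h') ∧ (∀ x, MemLp (h' x) p ν) ∧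
      ∀ᵐ x ∂μ, h' x = h x := by
  let A : Set X := {x | eLpNorm (h x) p ν < ∞}
  have hA : MeasurableSet A := measurable_eLpNorm_of_uncurry hp₀ hp hh measurableSet_Iio
  refine ⟨A.indicator h, ?_, fun x => ?_, ?_⟩
  · convert hh.indicator (measurable_fst hA) using 1
    ext ⟨x, z⟩
    by_cases hx : x ∈ A <;> simp [hx]
  · by_cases hx : x ∈ A
    · rw [indicator_of_mem hx]
      exact ⟨(hh.comp_measurable measurable_prodMk_left).aestronglyMeasurable, hx⟩
    · rw [indicator_of_notMem hx]
      exact MemLp.zero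
  · filter_upwards [hLp] with x hx using indicator_of_mem (show x ∈ A from hx.2) h

theorem stronglyMeasurable_Lp_of_ae_eq [Fact (1 ≤ p)] [SecondCountableTopology (Lp E p ν)]
    (hp : p ≠ ∞) {h : X → Z → E} (hh : StronglyMeasurable (Function.uncurry h))
    {G : X → Lp E p ν} (hG : ∀ x, G x =ᵐ[ν] h x) : StronglyMeasurable G := by
  have hp₀ : p ≠ 0 := (zero_lt_one.trans_le Fact.out).ne'
  borelize ↥(Lp E p ν)
  refine (measurable_of_measurable_dist fun g => ?_).stronglyMeasurable
  have hdist : ∀ x, dist (G x) g = (eLpNorm (fun z => h x z - g z) p ν).toReal := fun x => by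
    rw [Lp.dist_def, eLpNorm_congr_ae ((hG x).sub EventuallyEq.rfl)]
    rfl
  simp_rw [hdist]
  exact (measurable_eLpNorm_of_uncurry hp₀ hp
    (hh.sub ((Lp.stronglyMeasurable g).comp_measurable measurable_snd))).ennreal_toReal

theorem aestronglyMeasurable_comp_of_continuous {M N : Type*} [TopologicalSpace M]
    [TopologicalSpace.MetrizableSpace M]
    [SecondCountableTopology M] [TopologicalSpace N] [TopologicalSpace.PseudoMetrizableSpace N]
    {Φ : M → X → N} (hΦc : ∀ x, Continuous fun v => Φ v x) (hΦm : ∀ v, StronglyMeasurable (Φ v))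
    {f : X → M} (hf : AEStronglyMeasurable f μ) :
    AEStronglyMeasurable (fun x => Φ (f x) x) μ := by
  borelize M
  have hΦ := stronglyMeasurable_uncurry_of_continuous_of_stronglyMeasurable hΦc hΦm
  exact (hΦ.aestronglyMeasurable.comp_aemeasurable (hf.aemeasurable.prodMk aemeasurable_id))

end Slices

/-- The integral operator `v ↦ ∫ k(·, z) v(z) dν(z)` with kernel `k`, the operator `B_k` of the
paper, as an operation on functions. The Bochner integral gives it the value `0` at those `x` for
which `k(x, ·) v` is not integrable. -/
def kernelIntegral {X Z 𝕜 E : Type*} [MeasurableSpace Z] [NormedField 𝕜] [NormedAddCommGroup E]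
    [NormedSpace ℝ E] [NormedSpace 𝕜 E] (ν : Measure Z) (k : X → Z → 𝕜) (v : Z → E) (x : X) : E :=
  ∫ z, k x z • v z ∂ν

/-- The layer `v ↦ σ ∘ (α - B_k v)` of the paper, the velocity field of the forward propagation
equation, as an operation on functions. -/
def layer {X Z 𝕜 E F : Type*} [MeasurableSpace Z] [NormedField 𝕜] [NormedAddCommGroup E]
    [NormedSpace ℝ E] [NormedSpace 𝕜 E] (σ : E → F) (ν : Measure Z) (α : X → E) (k : X → Z → 𝕜)
    (v : Z → E) (x : X) : F :=
  σ (α x - kernelIntegral ν k v x)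

section Kernel

variable {X Z 𝕜 E F : Type*} [MeasurableSpace X] [MeasurableSpace Z] [NormedField 𝕜]
  [NormedAddCommGroup E] [NormedSpace ℝ E] [NormedSpace 𝕜 E] [NormedAddCommGroup F]
  {μ : Measure X} {ν : Measure Z} [SFinite ν] {p q : ℝ≥0∞} [ENNReal.HolderConjugate p q]
  {k : X → Z → 𝕜} {v w : Z → E} {α : X → E} {σ : E → F} {L : ℝ≥0}

theorem eLpNorm_kernelIntegral_le (hp : p ≠ ∞)
    (hk : AEStronglyMeasurable (Function.uncurry k) (μ.prod ν)) (hv : AEStronglyMeasurable v ν) :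
    eLpNorm (kernelIntegral ν k v) p μ
      ≤ eLpNorm (Function.uncurry k) p (μ.prod ν) * eLpNorm v q ν := by
  have hp₀ : p ≠ 0 := ENNReal.HolderConjugate.ne_zero p q
  have hbound : ∀ᵐ x ∂μ, ‖kernelIntegral ν k v x‖ₑ ≤ eLpNorm v q ν * ‖eLpNorm (k x) p ν‖ₑ := by
    filter_upwards [hk.prodMk_left] with x hx
    calc ‖kernelIntegral ν k v x‖ₑ ≤ ∫⁻ z, ‖k x z • v z‖ₑ ∂ν := enorm_integral_le_lintegral_enorm _
      _ = eLpNorm (k x • v) 1 ν := eLpNorm_one_eq_lintegral_enorm.symm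
      _ ≤ eLpNorm (k x) p ν * eLpNorm v q ν := eLpNorm_smul_le_mul_eLpNorm hv hx
      _ = eLpNorm v q ν * ‖eLpNorm (k x) p ν‖ₑ := mul_comm _ _
  calc eLpNorm (kernelIntegral ν k v) p μ
      ≤ eLpNorm v q ν * eLpNorm (fun x => eLpNorm (k x) p ν) p μ :=
        eLpNorm_le_mul_eLpNorm_of_ae_le_mul'' p
          (aemeasurable_eLpNorm_of_uncurry hp₀ hp hk).aestronglyMeasurable hbound
    _ = eLpNorm (Function.uncurry k) p (μ.prod ν) * eLpNorm v q ν := by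
        rw [eLpNorm_eLpNorm_eq_eLpNorm_uncurry hp₀ hp hk, mul_comm]

theorem memLp_kernelIntegral (hp : p ≠ ∞) (hk : MemLp (Function.uncurry k) p (μ.prod ν))
    (hv : MemLp v q ν) : MemLp (kernelIntegral ν k v) p μ :=
  ⟨(hk.1.smul hv.1.comp_snd).integral_prod_right',
    (eLpNorm_kernelIntegral_le hp hk.1 hv.1).trans_lt (ENNReal.mul_lt_top hk.2 hv.2)⟩

theorem kernelIntegral_sub_ae (hp : p ≠ ∞) (hk : MemLp (Function.uncurry k) p (μ.prod ν))
    (hv : MemLp v q ν) (hw : MemLp w q ν) :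
    kernelIntegral ν k (v - w) =ᵐ[μ] kernelIntegral ν k v - kernelIntegral ν k w := by
  filter_upwards [ae_memLp_of_memLp_uncurry (ENNReal.HolderConjugate.ne_zero p q) hp hk] with x hx
  simp only [kernelIntegral, Pi.sub_apply, smul_sub]
  exact integral_sub (memLp_one_iff_integrable.1 (hv.smul hx))
    (memLp_one_iff_integrable.1 (hw.smul hx))

theorem memLp_layer (hp : p ≠ ∞) (hσ : LipschitzWith L σ) (hσ₀ : σ 0 = 0) (hα : MemLp α p μ)
    (hk : MemLp (Function.uncurry k) p (μ.prod ν)) (hv : MemLp v q ν) :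
    MemLp (layer σ ν α k v) p μ :=
  hσ.comp_memLp hσ₀ (hα.sub (memLp_kernelIntegral hp hk hv))

theorem eLpNorm_layer_le (hp : p ≠ ∞) (hσ : LipschitzWith L σ) (hσ₀ : σ 0 = 0)
    (hα : AEStronglyMeasurable α μ)
    (hk : AEStronglyMeasurable (Function.uncurry k) (μ.prod ν)) (hv : AEStronglyMeasurable v ν) :
    eLpNorm (layer σ ν α k v) p μ
      ≤ L * (eLpNorm α p μ + eLpNorm (Function.uncurry k) p (μ.prod ν) * eLpNorm v q ν) := by
  have hLip : ∀ x, ‖layer σ ν α k v x‖₊ ≤ L * ‖(α - kernelIntegral ν k v) x‖₊ := fun x => by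
    simpa [layer, hσ₀, nndist_eq_nnnorm] using hσ.nndist_le (α x - kernelIntegral ν k v x) 0
  calc eLpNorm (layer σ ν α k v) p μ
      ≤ L * eLpNorm (α - kernelIntegral ν k v) p μ :=
        eLpNorm_le_nnreal_smul_eLpNorm_of_ae_le_mul (.of_forall hLip) p
    _ ≤ L * (eLpNorm α p μ + eLpNorm (kernelIntegral ν k v) p μ) := by
        gcongr
        exact eLpNorm_sub_le hα (hk.smul hv.comp_snd).integral_prod_right'
          (ENNReal.HolderConjugate.one_le p q)
    _ ≤ L * (eLpNorm α p μ + eLpNorm (Function.uncurry k) p (μ.prod ν) * eLpNorm v q ν) := by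
        gcongr
        exact eLpNorm_kernelIntegral_le hp hk hv

theorem eLpNorm_layer_sub_layer_le (hp : p ≠ ∞) (hσ : LipschitzWith L σ)
    (hk : MemLp (Function.uncurry k) p (μ.prod ν)) (hv : MemLp v q ν) (hw : MemLp w q ν) :
    eLpNorm (layer σ ν α k v - layer σ ν α k w) p μ
      ≤ L * (eLpNorm (Function.uncurry k) p (μ.prod ν) * eLpNorm (v - w) q ν) := by
  have hLip : ∀ᵐ x ∂μ, ‖(layer σ ν α k v - layer σ ν α k w) x‖₊
      ≤ L * ‖kernelIntegral ν k (v - w) x‖₊ := by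
    filter_upwards [kernelIntegral_sub_ae hp hk hv hw] with x hx
    rw [hx, Pi.sub_apply, Pi.sub_apply, ← nndist_eq_nnnorm, ← nndist_eq_nnnorm]
    refine (hσ.nndist_le _ _).trans_eq ?_
    rw [nndist_sub_left]
  calc eLpNorm (layer σ ν α k v - layer σ ν α k w) p μ
      ≤ L * eLpNorm (kernelIntegral ν k (v - w)) p μ :=
        eLpNorm_le_nnreal_smul_eLpNorm_of_ae_le_mul hLip p
    _ ≤ L * (eLpNorm (Function.uncurry k) p (μ.prod ν) * eLpNorm (v - w) q ν) := by
        gcongr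
        exact eLpNorm_kernelIntegral_le hp hk.1 (hv.sub hw).1

theorem norm_sub_le_of_ae_eq_layer [Fact (1 ≤ p)] [Fact (1 ≤ q)] (hp : p ≠ ∞)
    (hσ : LipschitzWith L σ) (hk : MemLp (Function.uncurry k) p (μ.prod ν)) {v w : Lp E q ν}
    {g h : Lp F p μ} (hg : g =ᵐ[μ] layer σ ν α k v) (hh : h =ᵐ[μ] layer σ ν α k w) :
    ‖g - h‖ ≤ L * (eLpNorm (Function.uncurry k) p (μ.prod ν)).toReal * ‖v - w‖ := by
  have hle : ‖g - h‖ₑ ≤ L * (eLpNorm (Function.uncurry k) p (μ.prod ν) * ‖v - w‖ₑ) := by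
    rw [Lp.enorm_def, Lp.enorm_def, eLpNorm_congr_ae ((Lp.coeFn_sub g h).trans (hg.sub hh)),
      eLpNorm_congr_ae (Lp.coeFn_sub v w)]
    exact eLpNorm_layer_sub_layer_le hp hσ hk (Lp.memLp v) (Lp.memLp w)
  have hfin : L * (eLpNorm (Function.uncurry k) p (μ.prod ν) * ‖v - w‖ₑ) ≠ ∞ :=
    ENNReal.mul_ne_top ENNReal.coe_ne_top (ENNReal.mul_ne_top hk.2.ne enorm_ne_top)
  simpa [mul_assoc] using ENNReal.toReal_mono hfin hle

end Kernel

section Parameters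

variable {S X Z 𝕜 E F : Type*} [MeasurableSpace S] [MeasurableSpace X] [MeasurableSpace Z]
  [NormedField 𝕜] [NormedAddCommGroup E] [NormedSpace ℝ E] [NormedSpace 𝕜 E]
  [NormedAddCommGroup F] {ρ : Measure S} {μ : Measure X} {ν : Measure Z} [SFinite ν]
  {p q : ℝ≥0∞} {σ : E → F} {L : ℝ≥0} {a : S → X → E} {b : S → X → Z → 𝕜}

theorem stronglyMeasurable_uncurry_layer (hσ : Continuous σ)
    (ha : StronglyMeasurable (Function.uncurry a))
    (hb : StronglyMeasurable (Function.uncurry fun s => Function.uncurry (b s)))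
    {v : Z → E} (hv : StronglyMeasurable v) :
    StronglyMeasurable (Function.uncurry fun s => layer σ ν (a s) (b s) v) := by
  have hkernel : StronglyMeasurable fun r : (S × X) × Z => b r.1.1 r.1.2 r.2 • v r.2 :=
    (hb.comp_measurable MeasurableEquiv.prodAssoc.measurable).smul
      (hv.comp_measurable measurable_snd)
  exact hσ.comp_stronglyMeasurable (ha.sub hkernel.integral_prod_right')

variable [Fact (1 ≤ p)] [Fact (1 ≤ q)] [ENNReal.HolderConjugate p q]
  [SecondCountableTopology (Lp E q ν)] [SecondCountableTopology (Lp F p μ)] [SFinite μ]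
  {f : S → Lp E q ν} {G : S → Lp F p μ}

theorem aestronglyMeasurable_of_ae_eq_layer_of_forall_memLp (hp : p ≠ ∞)
    (hσ : LipschitzWith L σ) (hσ₀ : σ 0 = 0)
    (ha : StronglyMeasurable (Function.uncurry a)) (haLp : ∀ s, MemLp (a s) p μ)
    (hb : StronglyMeasurable (Function.uncurry fun s => Function.uncurry (b s)))
    (hbLp : ∀ s, MemLp (Function.uncurry (b s)) p (μ.prod ν)) (hf : AEStronglyMeasurable f ρ)
    (hG : ∀ᵐ s ∂ρ, G s =ᵐ[μ] layer σ ν (a s) (b s) (f s)) : AEStronglyMeasurable G ρ := by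
  have hLp : ∀ (v : Lp E q ν) s, MemLp (layer σ ν (a s) (b s) v) p μ := fun v s =>
    memLp_layer hp hσ hσ₀ (haLp s) (hbLp s) (Lp.memLp v)
  have hcont : ∀ s, Continuous fun v => (hLp v s).toLp := fun s => by
    have hLip : LipschitzWith (L * (eLpNorm (Function.uncurry (b s)) p (μ.prod ν)).toNNReal)
        fun v => (hLp v s).toLp := .of_dist_le_mul fun v w => by
      rw [dist_eq_norm, dist_eq_norm]
      exact norm_sub_le_of_ae_eq_layer hp hσ (hbLp s) (hLp v s).coeFn_toLp (hLp w s).coeFn_toLp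
    exact hLip.continuous
  have hmeas : ∀ v : Lp E q ν, StronglyMeasurable fun s => (hLp v s).toLp := fun v =>
    stronglyMeasurable_Lp_of_ae_eq hp
      (stronglyMeasurable_uncurry_layer hσ.continuous ha hb (Lp.stronglyMeasurable v))
      fun s => (hLp v s).coeFn_toLp
  refine (aestronglyMeasurable_comp_of_continuous hcont hmeas hf).congr ?_
  filter_upwards [hG] with s hs
  exact Lp.ext ((hLp (f s) s).coeFn_toLp.trans hs.symm)

theorem aestronglyMeasurable_of_ae_eq_layer (hp : p ≠ ∞)
    (hσ : LipschitzWith L σ) (hσ₀ : σ 0 = 0)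
    (ha : StronglyMeasurable (Function.uncurry a)) (haLp : ∀ᵐ s ∂ρ, MemLp (a s) p μ)
    (hb : StronglyMeasurable (Function.uncurry fun s => Function.uncurry (b s)))
    (hbLp : ∀ᵐ s ∂ρ, MemLp (Function.uncurry (b s)) p (μ.prod ν)) (hf : AEStronglyMeasurable f ρ)
    (hG : ∀ᵐ s ∂ρ, G s =ᵐ[μ] layer σ ν (a s) (b s) (f s)) : AEStronglyMeasurable G ρ := by
  have hp₀ : p ≠ 0 := ENNReal.HolderConjugate.ne_zero p q
  obtain ⟨a', ha', haLp', haa'⟩ := exists_forall_memLp_ae_eq hp₀ hp ha haLp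
  obtain ⟨b', hb', hbLp', hbb'⟩ := exists_forall_memLp_ae_eq hp₀ hp hb hbLp
  refine aestronglyMeasurable_of_ae_eq_layer_of_forall_memLp (b := fun s => Function.curry (b' s))
    hp hσ hσ₀ ha' haLp' hb' hbLp' hf ?_
  filter_upwards [hG, haa', hbb'] with s hs has hbs
  rwa [has, hbs, Function.curry_uncurry]

theorem integrable_of_ae_eq_layer (hp : p ≠ ∞) (hσ : LipschitzWith L σ) (hσ₀ : σ 0 = 0)
    (ha : StronglyMeasurable (Function.uncurry a)) (haInt : ∫⁻ s, eLpNorm (a s) p μ ∂ρ ≠ ∞)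
    (hb : StronglyMeasurable (Function.uncurry fun s => Function.uncurry (b s)))
    (hbInt : ∫⁻ s, eLpNorm (Function.uncurry (b s)) p (μ.prod ν) ∂ρ ≠ ∞)
    (hf : MemLp f ∞ ρ) (hG : ∀ᵐ s ∂ρ, G s =ᵐ[μ] layer σ ν (a s) (b s) (f s)) :
    Integrable G ρ := by
  have hp₀ : p ≠ 0 := ENNReal.HolderConjugate.ne_zero p q
  have hameas : ∀ s, AEStronglyMeasurable (a s) μ := fun s =>
    (ha.comp_measurable measurable_prodMk_left).aestronglyMeasurable
  have hbmeas : ∀ s, AEStronglyMeasurable (Function.uncurry (b s)) (μ.prod ν) := fun s =>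
    (hb.comp_measurable measurable_prodMk_left).aestronglyMeasurable
  have haLp : ∀ᵐ s ∂ρ, MemLp (a s) p μ :=
    (ae_lt_top (measurable_eLpNorm_of_uncurry hp₀ hp ha) haInt).mono fun s hs => ⟨hameas s, hs⟩
  have hbLp : ∀ᵐ s ∂ρ, MemLp (Function.uncurry (b s)) p (μ.prod ν) :=
    (ae_lt_top (measurable_eLpNorm_of_uncurry hp₀ hp hb) hbInt).mono fun s hs => ⟨hbmeas s, hs⟩
  refine ⟨aestronglyMeasurable_of_ae_eq_layer hp hσ hσ₀ ha haLp hb hbLp hf.1 hG, ?_⟩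
  calc ∫⁻ s, ‖G s‖ₑ ∂ρ
      ≤ ∫⁻ s, L * (eLpNorm (a s) p μ
          + eLpNorm (Function.uncurry (b s)) p (μ.prod ν) * eLpNorm f ∞ ρ) ∂ρ := by
        refine lintegral_mono_ae ?_
        filter_upwards [hG, ae_le_eLpNormEssSup (f := f) (μ := ρ)] with s hs hfs
        rw [Lp.enorm_def, eLpNorm_congr_ae hs]
        refine (eLpNorm_layer_le (q := q) hp hσ hσ₀ (hameas s) (hbmeas s)
          (Lp.memLp (f s)).1).trans ?_
        rw [← Lp.enorm_def, eLpNorm_exponent_top]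
        gcongr
    _ = L * (∫⁻ s, eLpNorm (a s) p μ ∂ρ
          + (∫⁻ s, eLpNorm (Function.uncurry (b s)) p (μ.prod ν) ∂ρ) * eLpNorm f ∞ ρ) := by
        rw [lintegral_const_mul' _ _ ENNReal.coe_ne_top,
          lintegral_add_left (measurable_eLpNorm_of_uncurry hp₀ hp ha),
          lintegral_mul_const' _ _ hf.2.ne]
    _ < ∞ := ENNReal.mul_lt_top ENNReal.coe_lt_top
        (ENNReal.add_lt_top.2 ⟨haInt.lt_top, ENNReal.mul_lt_top hbInt.lt_top hf.2⟩)

theorem intervalIntegrable_of_eq_layer (hp : p ≠ ∞) (hσ : LipschitzWith L σ) (hσ₀ : σ 0 = 0)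
    {t₀ t₁ : ℝ} (ht : t₀ ≤ t₁) {a : ℝ → X → E} {b : ℝ → X → Z → 𝕜}
    (ha : StronglyMeasurable (Function.uncurry a))
    (haInt : ∫⁻ t in Ioc t₀ t₁, eLpNorm (a t) p μ ≠ ∞)
    (hb : StronglyMeasurable (Function.uncurry fun t => Function.uncurry (b t)))
    (hbInt : ∫⁻ t in Ioc t₀ t₁, eLpNorm (Function.uncurry (b t)) p (μ.prod ν) ≠ ∞)
    {f : ℝ → Lp E q ν} {G : ℝ → Lp F p μ} (hf : ContinuousOn f (Icc t₀ t₁))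
    (hG : ∀ t ∈ Icc t₀ t₁, G t =ᵐ[μ] layer σ ν (a t) (b t) (f t)) :
    IntervalIntegrable G volume t₀ t₁ := by
  rw [intervalIntegrable_iff_integrableOn_Ioc_of_le ht]
  have hfbdd : MemLp f ∞ (volume.restrict (Ioc t₀ t₁)) :=
    (memLp_top_restrict_of_continuousOn isCompact_Icc measurableSet_Icc hf).mono_measure
      (Measure.restrict_mono_set _ Ioc_subset_Icc_self)
  exact integrable_of_ae_eq_layer hp hσ hσ₀ ha haInt hb hbInt hfbdd
    (ae_restrict_of_forall_mem measurableSet_Ioc fun t ht => hG t (Ioc_subset_Icc_self ht))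

end Parameters

theorem forward_stability_general {X 𝕜 E : Type*} [MeasurableSpace X] {μ : Measure X} [SFinite μ]
    [NormedField 𝕜] [NormedAddCommGroup E] [NormedSpace ℝ E] [NormedSpace 𝕜 E] [CompleteSpace E]
    [SecondCountableTopology (Lp E 2 μ)] {σ : E → E} {L : ℝ≥0} (hσ : LipschitzWith L σ)
    (hσ₀ : σ 0 = 0) {T : ℝ} {a : ℝ → X → E} (ha : StronglyMeasurable (Function.uncurry a))
    (haInt : ∫⁻ t in Ioc 0 T, eLpNorm (a t) 2 μ < ∞) {b : ℝ → X → X → 𝕜}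
    (hb : StronglyMeasurable (Function.uncurry fun t => Function.uncurry (b t)))
    (hbInt : ∫⁻ t in Ioc 0 T, eLpNorm (Function.uncurry (b t)) 2 (μ.prod μ) < ∞)
    {f₁ f₂ G₁ G₂ : ℝ → Lp E 2 μ} (hf₁c : ContinuousOn f₁ (Icc 0 T))
    (hf₂c : ContinuousOn f₂ (Icc 0 T))
    (hG₁ : ∀ s ∈ Icc 0 T, G₁ s =ᵐ[μ] layer σ μ (a s) (b s) (f₁ s))
    (hG₂ : ∀ s ∈ Icc 0 T, G₂ s =ᵐ[μ] layer σ μ (a s) (b s) (f₂ s))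
    (hf₁ : ∀ t ∈ Icc 0 T, f₁ t = f₁ 0 + ∫ s in Ioc 0 t, G₁ s)
    (hf₂ : ∀ t ∈ Icc 0 T, f₂ t = f₂ 0 + ∫ s in Ioc 0 t, G₂ s) :
    ∀ t ∈ Icc 0 T, ‖f₁ t - f₂ t‖ ≤ Real.exp (L * ∫ s in Ioc 0 t,
      (eLpNorm (Function.uncurry (b s)) 2 (μ.prod μ)).toReal) * ‖f₁ 0 - f₂ 0‖ := by
  intro t ht
  have hT : 0 ≤ T := ht.1.trans ht.2
  have hbmeas : ∀ s, AEStronglyMeasurable (Function.uncurry (b s)) (μ.prod μ) := fun s =>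
    (hb.comp_measurable measurable_prodMk_left).aestronglyMeasurable
  have hβ : Measurable fun s => eLpNorm (Function.uncurry (b s)) 2 (μ.prod μ) :=
    measurable_eLpNorm_of_uncurry two_ne_zero ENNReal.ofNat_ne_top hb
  have hG₁int : IntervalIntegrable G₁ volume 0 T :=
    intervalIntegrable_of_eq_layer ENNReal.ofNat_ne_top hσ hσ₀ hT ha haInt.ne hb hbInt.ne hf₁c hG₁
  have hG₂int : IntervalIntegrable G₂ volume 0 T :=
    intervalIntegrable_of_eq_layer ENNReal.ofNat_ne_top hσ hσ₀ hT ha haInt.ne hb hbInt.ne hf₂c hG₂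
  have hk : IntervalIntegrable
      (fun s => L * (eLpNorm (Function.uncurry (b s)) 2 (μ.prod μ)).toReal) volume 0 T :=
    ((intervalIntegrable_iff_integrableOn_Ioc_of_le hT).2
      (integrable_toReal_of_lintegral_ne_top hβ.aemeasurable hbInt.ne)).const_mul _
  have hrate : ∀ᵐ s, s ∈ Ioc 0 T → ‖G₁ s - G₂ s‖
      ≤ L * (eLpNorm (Function.uncurry (b s)) 2 (μ.prod μ)).toReal * ‖f₁ s - f₂ s‖ := by
    filter_upwards [(ae_restrict_iff' measurableSet_Ioc).1 (ae_lt_top hβ hbInt.ne)] with s hs hsT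
    exact norm_sub_le_of_ae_eq_layer ENNReal.ofNat_ne_top hσ ⟨hbmeas s, hs hsT⟩
      (hG₁ s (Ioc_subset_Icc_self hsT)) (hG₂ s (Ioc_subset_Icc_self hsT))
  rw [← intervalIntegral.integral_of_le ht.1, ← intervalIntegral.integral_const_mul]
  refine norm_sub_le_exp_integral_mul_norm_sub_of_eq_add_integral ht hG₁int hG₂int hk
    (fun _ _ => by positivity) hrate (fun r hr => ?_) fun r hr => ?_
  · rw [intervalIntegral.integral_of_le hr.1, ← hf₁ r hr]
  · rw [intervalIntegral.integral_of_le hr.1, ← hf₂ r hr]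

/-- Stability and uniqueness for the forward propagation equation: two continuous
solutions of the integral equation satisfy
`‖f₁(t) - f₂(t)‖ ≤ exp(L_σ ∫₀^t ‖b(s)‖_{L²(Y×Y)} ds) ‖f₁(0) - f₂(0)‖`;
in particular solutions with the same initial datum coincide. -/
theorem forward_stability {n : ℕ} (Y : Set (Fin n → ℝ)) (hY : MeasurableSet Y)
    (σ : ℝ → ℝ) (Lσ : NNReal) (hσ : LipschitzWith Lσ σ) (hσ0 : σ 0 = 0)
    (T : ℝ) (hT : 0 < T)
    (a : ℝ → (Fin n → ℝ) → ℝ)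
    (ha_meas : Measurable (Function.uncurry a))
    (ha_int : ∫⁻ t in Ioc (0:ℝ) T, eLpNorm (a t) 2 (μY Y) < ⊤)
    (b : ℝ → (Fin n → ℝ) → (Fin n → ℝ) → ℝ)
    (hb_meas : Measurable fun p : ℝ × ((Fin n → ℝ) × (Fin n → ℝ)) => b p.1 p.2.1 p.2.2)
    (hb_int : ∫⁻ t in Ioc (0:ℝ) T,
      eLpNorm (fun q : (Fin n → ℝ) × (Fin n → ℝ) => b t q.1 q.2) 2 ((μY Y).prod (μY Y)) < ⊤)
    (f₁ f₂ G₁ G₂ : ℝ → Lp ℝ 2 (μY Y))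
    (hf₁cont : ContinuousOn f₁ (Icc 0 T)) (hf₂cont : ContinuousOn f₂ (Icc 0 T))
    (hG₁ : ∀ s ∈ Icc (0:ℝ) T,
      ⇑(G₁ s) =ᵐ[μY Y] fun y => σ (a s y - ∫ z, b s y z * f₁ s z ∂(μY Y)))
    (hG₂ : ∀ s ∈ Icc (0:ℝ) T,
      ⇑(G₂ s) =ᵐ[μY Y] fun y => σ (a s y - ∫ z, b s y z * f₂ s z ∂(μY Y)))
    (hf₁ : ∀ t ∈ Icc (0:ℝ) T, f₁ t = f₁ 0 + ∫ s in Ioc (0:ℝ) t, G₁ s)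
    (hf₂ : ∀ t ∈ Icc (0:ℝ) T, f₂ t = f₂ 0 + ∫ s in Ioc (0:ℝ) t, G₂ s) :
    (∀ t ∈ Icc (0:ℝ) T,
      ‖f₁ t - f₂ t‖ ≤
        Real.exp ((Lσ : ℝ) * ∫ s in Ioc (0:ℝ) t,
            (eLpNorm (fun q : (Fin n → ℝ) × (Fin n → ℝ) => b s q.1 q.2) 2
              ((μY Y).prod (μY Y))).toReal) * ‖f₁ 0 - f₂ 0‖) ∧
    (f₁ 0 = f₂ 0 → ∀ t ∈ Icc (0:ℝ) T, f₁ t = f₂ t) := by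
  have : Fact ((2 : ℝ≥0∞) ≠ ∞) := ⟨ENNReal.ofNat_ne_top⟩
  have h := forward_stability_general hσ hσ0 ha_meas.stronglyMeasurable ha_int
    hb_meas.stronglyMeasurable hb_int hf₁cont hf₂cont hG₁ hG₂ hf₁ hf₂
  exact ⟨h, fun h₀ t ht => by simpa [h₀, sub_eq_zero] using h t ht⟩
end
end

section
/- Let B be a bounded self-adjoint operator on L²(Y), and let σ : ℝ → ℝ be globally Lipschitz with σ(0) = 0 and s·σ(s) ≥ 0 for all s ∈ ℝ. If u_e ∈ Range(B) and the function σ∘u_e belongs to the kernel of B, then u_e(y)·σ(u_e(y)) = 0 for almost every y ∈ Y. -/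
open MeasureTheory Filter Set
open scoped RealInnerProductSpace

noncomputable section

section SymmetricOperator

variable {𝕜 E : Type*} [RCLike 𝕜] [NormedAddCommGroup E] [InnerProductSpace 𝕜 E]

theorem isOrtho_topologicalClosure_range_ker_of_isSymmetric {T : E →ₗ[𝕜] E} (hT : T.IsSymmetric) :
    T.range.topologicalClosure ⟂ T.ker := by
  rw [Submodule.isOrtho_comm, Submodule.isOrtho_iff_le, Submodule.orthogonal_closure,
    hT.orthogonal_range]

end SymmetricOperator

section SquareIntegrable

variable {α E : Type*} [MeasurableSpace α] {μ : Measure α} [NormedAddCommGroup E]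
  [InnerProductSpace ℝ E]

theorem L2_inner_eq_zero_iff_ae_inner_eq_zero_of_nonneg {f g : Lp E 2 μ}
    (hfg : ∀ᵐ x ∂μ, 0 ≤ ⟪f x, g x⟫) :
    ⟪f, g⟫ = 0 ↔ ∀ᵐ x ∂μ, ⟪f x, g x⟫ = 0 := by
  rw [L2.inner_def]
  exact integral_eq_zero_iff_of_nonneg_ae hfg (L2.integrable_inner f g)

theorem equilibrium_sign_vanishes_general {σ : E → E} (hσ : ∀ s, 0 ≤ ⟪s, σ s⟫)
    {T : Lp E 2 μ →ₗ[ℝ] Lp E 2 μ} (hT : T.IsSymmetric)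
    {u g : Lp E 2 μ} (hu : u ∈ T.range.topologicalClosure) (hgσ : g =ᵐ[μ] fun x => σ (u x))
    (hg : g ∈ T.ker) :
    ∀ᵐ x ∂μ, ⟪u x, σ (u x)⟫ = 0 := by
  have hnonneg : ∀ᵐ x ∂μ, 0 ≤ ⟪u x, g x⟫ := by
    filter_upwards [hgσ] with x hx using hx ▸ hσ (u x)
  have horth : ⟪u, g⟫ = 0 :=
    (isOrtho_topologicalClosure_range_ker_of_isSymmetric hT).inner_eq hu hg
  have hzero : ∀ᵐ x ∂μ, ⟪u x, g x⟫ = 0 :=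
    (L2_inner_eq_zero_iff_ae_inner_eq_zero_of_nonneg hnonneg).mp horth
  filter_upwards [hzero, hgσ] with x hzero_x hx
  rwa [← hx]

end SquareIntegrable

/-- If `B` is bounded self-adjoint, `s σ(s) ≥ 0`, `u_e ∈ Range(B)` and
`σ ∘ u_e ∈ Ker(B)`, then `u_e σ(u_e) = 0` a.e. on `Y`. -/
theorem equilibrium_sign_vanishes {n : ℕ} (Y : Set (Fin n → ℝ)) (hY : MeasurableSet Y)
    (σ : ℝ → ℝ) (K : NNReal) (hσ : LipschitzWith K σ) (hσ0 : σ 0 = 0)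
    (hsign : ∀ s : ℝ, 0 ≤ s * σ s)
    (B : Lp ℝ 2 (μY Y) →L[ℝ] Lp ℝ 2 (μY Y))
    (hBsa : IsSelfAdjoint B)
    (ue : Lp ℝ 2 (μY Y)) (hue : ue ∈ Set.range B)
    (g : Lp ℝ 2 (μY Y)) (hg : ⇑g =ᵐ[μY Y] fun y => σ (ue y))
    (hker : B g = 0) :
    ∀ᵐ y ∂(μY Y), ue y * σ (ue y) = 0 := by
  simpa only [Real.inner_apply] using equilibrium_sign_vanishes_general
    (by simpa only [Real.inner_apply] using hsign) hBsa.isSymmetric (subset_closure hue) hg hker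
end
end

section
/- Let B be a compact self-adjoint operator on L²(Y) with ⟨B v, v⟩_{L²(Y)} > 0 for every nonzero v ∈ L²(Y) (so all eigenvalues of B are positive and 0 is not an eigenvalue), and let c > 0. Let w : [0,∞) → L²(Y) be a continuously differentiable curve with w'(t) = −c B w(t) and w(0) = w_I ∈ L²(Y). Then t ↦ ‖w(t)‖_{L²(Y)} is nonincreasing, and w(t) → 0 in L²(Y) as t → ∞. -/
open MeasureTheory Filter Set
open scoped RealInnerProductSpace

noncomputable section

/-!
The energy `⟪A w, w⟫ + 2 t ‖A w‖²` is nonincreasing along a solution of `w' = -A w` with `A`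
positive, so `A w → 0` at the rate `t ^ (-1 / 2)`. If `u` is a solution, then so is `A u`; hence a
solution `w` with initial value in the closure of the range of `A` can be approximated by solutions
of the form `A u`, uniformly in time because the norm of the difference does not increase, and
therefore tends to `0`. Subtracting from `w` the constant solution given by the projection of `w 0`
onto the kernel of `A` reduces the general case to this one.
-/

theorem antitoneOn_Ici_of_hasDerivWithinAt_nonpos {f f' : ℝ → ℝ} {a : ℝ}
    (hf : ∀ t ∈ Ici a, HasDerivWithinAt f (f' t) (Ici a) t) (hf' : ∀ t ∈ Ici a, f' t ≤ 0) :
    AntitoneOn f (Ici a) :=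
  antitoneOn_of_hasDerivWithinAt_nonpos (convex_Ici a)
    (fun t ht => (hf t ht).continuousWithinAt)
    (fun t ht => (hf t (interior_subset ht)).mono interior_subset)
    (fun t ht => hf' t (interior_subset ht))

section Solutions

variable {E : Type*} [NormedAddCommGroup E] [NormedSpace ℝ E] {A : E →L[ℝ] E} {w : ℝ → E}

/-- The curve `w` solves `w' = -A w` on `[0, ∞)`, with the one-sided derivative at `0`. Its values
at negative times are irrelevant. -/
def IsForwardSolution (A : E →L[ℝ] E) (w : ℝ → E) : Prop :=
  ∀ t ∈ Ici (0 : ℝ), HasDerivWithinAt w (-A (w t)) (Ici 0) t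

namespace IsForwardSolution

theorem sub {u : ℝ → E} (hu : IsForwardSolution A u) (hw : IsForwardSolution A w) :
    IsForwardSolution A (fun t => u t - w t) := fun t ht =>
  ((hu t ht).sub (hw t ht)).congr_deriv (by rw [map_sub]; abel)

theorem map (hw : IsForwardSolution A w) : IsForwardSolution A (fun t => A (w t)) := fun t ht =>
  (A.hasFDerivAt.comp_hasDerivWithinAt t (hw t ht)).congr_deriv (map_neg A _)

theorem const {v : E} (hv : A v = 0) : IsForwardSolution A (fun _ => v) := fun t _ =>
  (hasDerivWithinAt_const t _ v).congr_deriv (by rw [hv, neg_zero])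

theorem exp_apply [CompleteSpace E] (A : E →L[ℝ] E) (v : E) :
    IsForwardSolution A (fun t => NormedSpace.exp (t • -A) v) := fun t _ =>
  ((hasDerivAt_exp_smul_const' (-A) t).clm_apply
    (hasDerivAt_const t v)).hasDerivWithinAt.congr_deriv (by simp)

end IsForwardSolution

end Solutions

section InnerProductSpace

variable {E : Type*} [NormedAddCommGroup E] [InnerProductSpace ℝ E]
  {A : E →L[ℝ] E} {w : ℝ → E}

theorem isPositive_of_inner_pos (hsymm : A.IsSymmetric) (hpos : ∀ v, v ≠ 0 → 0 < ⟪A v, v⟫) :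
    A.IsPositive := by
  refine A.isPositive_iff.mpr ⟨hsymm, fun v => ?_⟩
  rcases eq_or_ne v 0 with rfl | hv
  · rw [map_zero, inner_zero_left]
  · exact (hpos v hv).le

theorem ker_eq_bot_of_inner_pos (hpos : ∀ v, v ≠ 0 → 0 < ⟪A v, v⟫) : A.ker = ⊥ := by
  refine (Submodule.eq_bot_iff _).mpr fun v hv => ?_
  have hAv : A v = 0 := hv
  by_contra hne
  exact (hpos v hne).ne' (by rw [hAv, inner_zero_left])

namespace IsForwardSolution

theorem antitoneOn_norm (hw : IsForwardSolution A w) (hA : ∀ v, 0 ≤ ⟪A v, v⟫) :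
    AntitoneOn (fun t => ‖w t‖) (Ici 0) := by
  have hsq : AntitoneOn (fun t => ‖w t‖ ^ 2) (Ici 0) := by
    refine antitoneOn_Ici_of_hasDerivWithinAt_nonpos (fun t ht => (hw t ht).norm_sq) fun t _ => ?_
    rw [inner_neg_right, real_inner_comm]
    linarith [hA (w t)]
  exact fun s hs t ht hst => le_of_sq_le_sq (hsq hs ht hst) (norm_nonneg _)

theorem hasDerivWithinAt_energy (hw : IsForwardSolution A w) (hA : A.IsSymmetric) {t : ℝ}
    (ht : 0 ≤ t) :
    HasDerivWithinAt (fun t => ⟪A (w t), w t⟫ + 2 * t * ‖A (w t)‖ ^ 2)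
      (-(4 * t * ⟪A (A (w t)), A (w t)⟫)) (Ici 0) t := by
  have hquad : HasDerivWithinAt (fun t => ⟪A (w t), w t⟫) (-(2 * ‖A (w t)‖ ^ 2)) (Ici 0) t := by
    refine ((hw.map t ht).inner ℝ (hw t ht)).congr_deriv ?_
    have hAA : ⟪A (A (w t)), w t⟫ = ⟪A (w t), A (w t)⟫ := hA _ _
    rw [inner_neg_right, inner_neg_left, hAA, real_inner_self_eq_norm_sq]
    ring
  have hlin : HasDerivWithinAt (fun t : ℝ => 2 * t) (2 * 1) (Ici 0) t :=
    (hasDerivWithinAt_id t _).const_mul 2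
  refine (hquad.add (hlin.mul (hw.map t ht).norm_sq)).congr_deriv ?_
  rw [inner_neg_right, real_inner_comm]
  ring

theorem two_mul_mul_norm_map_sq_le (hw : IsForwardSolution A w) (hA : A.IsPositive) {t : ℝ}
    (ht : 0 ≤ t) : 2 * t * ‖A (w t)‖ ^ 2 ≤ ⟪A (w 0), w 0⟫ := by
  have hanti : AntitoneOn (fun s => ⟪A (w s), w s⟫ + 2 * s * ‖A (w s)‖ ^ 2) (Ici 0) := by
    refine antitoneOn_Ici_of_hasDerivWithinAt_nonpos
      (fun s hs => hw.hasDerivWithinAt_energy hA.isSymmetric hs) fun s hs => ?_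
    have hs0 : 0 ≤ s := hs
    have hAA := hA.inner_nonneg_left (A (w s))
    exact neg_nonpos.mpr (by positivity)
  calc 2 * t * ‖A (w t)‖ ^ 2
      ≤ ⟪A (w t), w t⟫ + 2 * t * ‖A (w t)‖ ^ 2 :=
        le_add_of_nonneg_left (hA.inner_nonneg_left _)
    _ ≤ ⟪A (w 0), w 0⟫ + 2 * 0 * ‖A (w 0)‖ ^ 2 := hanti self_mem_Ici ht ht
    _ = ⟪A (w 0), w 0⟫ := by ring

theorem tendsto_map_zero (hw : IsForwardSolution A w) (hA : A.IsPositive) :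
    Tendsto (fun t => A (w t)) atTop (nhds 0) := by
  have hbound : Tendsto (fun t : ℝ => ⟪A (w 0), w 0⟫ / (2 * t)) atTop (nhds 0) :=
    (tendsto_id.const_mul_atTop two_pos).const_div_atTop _
  have hsq : Tendsto (fun t => ‖A (w t)‖ ^ 2) atTop (nhds 0) := by
    refine squeeze_zero' (Eventually.of_forall fun t => by positivity) ?_ hbound
    filter_upwards [eventually_gt_atTop 0] with t ht
    rw [le_div_iff₀' (by positivity)]
    exact hw.two_mul_mul_norm_map_sq_le hA ht.le
  rw [tendsto_zero_iff_norm_tendsto_zero]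
  simpa only [Real.sqrt_sq (norm_nonneg _), Real.sqrt_zero] using hsq.sqrt

theorem tendsto_zero_of_mem_closure_range [CompleteSpace E] (hw : IsForwardSolution A w)
    (hA : A.IsPositive) (hw0 : w 0 ∈ closure (range A)) : Tendsto w atTop (nhds 0) := by
  refine Metric.tendsto_nhds.mpr fun ε hε => ?_
  obtain ⟨_, ⟨v, rfl⟩, hv⟩ := Metric.mem_closure_iff.mp hw0 (ε / 2) (half_pos hε)
  let u : ℝ → E := fun t => NormedSpace.exp (t • -A) v
  have hu : IsForwardSolution A u := exp_apply A v
  have hu0 : u 0 = v := by simp [u]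
  have hanti := (hw.sub hu.map).antitoneOn_norm hA.inner_nonneg_left
  filter_upwards [Metric.tendsto_nhds.mp (hu.tendsto_map_zero hA) (ε / 2) (half_pos hε),
    eventually_ge_atTop 0] with t hAu ht
  calc dist (w t) 0 ≤ dist (w t) (A (u t)) + dist (A (u t)) 0 := dist_triangle _ _ _
    _ ≤ dist (w 0) (A v) + dist (A (u t)) 0 := by
        gcongr
        simpa only [dist_eq_norm, hu0] using hanti self_mem_Ici ht ht
    _ < ε := by linarith

theorem tendsto_starProjection_ker [CompleteSpace E] (hw : IsForwardSolution A w)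
    (hA : A.IsPositive) : Tendsto w atTop (nhds (A.ker.starProjection (w 0))) := by
  set p := A.ker.starProjection (w 0)
  have hp : A p = 0 := A.ker.starProjection_apply_mem (w 0)
  have hmem : w 0 - p ∈ closure (range A) := by
    have horth : w 0 - p ∈ A.kerᗮ := A.ker.sub_starProjection_mem_orthogonal (w 0)
    rwa [A.orthogonal_ker, hA.isSelfAdjoint.adjoint_eq] at horth
  simpa only [sub_add_cancel, zero_add] using
    ((hw.sub (const hp)).tendsto_zero_of_mem_closure_range hA hmem).add_const p

end IsForwardSolution

theorem linearized_asymptotic_stability_general [CompleteSpace E] {B : E →L[ℝ] E}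
    (hB : B.IsPositive) {c : ℝ} (hc : 0 < c)
    (hderiv : ∀ t ∈ Ici (0 : ℝ), HasDerivWithinAt w (-(c • B (w t))) (Ici 0) t) :
    AntitoneOn (fun t => ‖w t‖) (Ici 0) ∧
      Tendsto w atTop (nhds (B.ker.starProjection (w 0))) := by
  have hw : IsForwardSolution (c • B) w := hderiv
  have hcB : (c • B).IsPositive := hB.smul_of_nonneg hc.le
  have hker : (c • B).ker = B.ker := LinearMap.ker_smul B.toLinearMap c hc.ne'
  refine ⟨hw.antitoneOn_norm hcB.inner_nonneg_left, ?_⟩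
  simpa only [hker] using hw.tendsto_starProjection_ker hcB

end InnerProductSpace

/-- For a compact self-adjoint strictly positive operator `B` and `c > 0`, every
solution of the linearized equation `w' = -c B w` has nonincreasing norm and
converges to `0` in `L²(Y)` as `t → ∞`. -/
theorem linearized_asymptotic_stability {n : ℕ} (Y : Set (Fin n → ℝ))
    (hY : MeasurableSet Y)
    (B : Lp ℝ 2 (μY Y) →L[ℝ] Lp ℝ 2 (μY Y))
    (hBcompact : IsCompactOperator B)
    (hBsa : IsSelfAdjoint B)
    (hBpos : ∀ v : Lp ℝ 2 (μY Y), v ≠ 0 → 0 < ⟪B v, v⟫)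
    (c : ℝ) (hc : 0 < c)
    (wI : Lp ℝ 2 (μY Y))
    (w : ℝ → Lp ℝ 2 (μY Y))
    (hw0 : w 0 = wI)
    (hderiv : ∀ t ∈ Ici (0:ℝ), HasDerivWithinAt w (-(c • B (w t))) (Ici 0) t) :
    AntitoneOn (fun t => ‖w t‖) (Ici 0) ∧ Tendsto w atTop (nhds 0) := by
  simpa only [ker_eq_bot_of_inner_pos hBpos, Submodule.starProjection_bot, zero_apply] using
    linearized_asymptotic_stability_general (isPositive_of_inner_pos hBsa.isSymmetric hBpos) hc
      hderiv
end
end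

section
/- Let σ : ℝ → ℝ be continuously differentiable with bounded derivative, σ(0) = 0, and σ'(s) > 0 for all s ∈ ℝ. Let 0 < T < ∞, let a, b be measurable with ∫₀^T ‖a(·,t)‖_{L²(Y)} dt < ∞ and ∫₀^T ‖b(·,·,t)‖_{L²(Y×Y)} dt < ∞, let f : [0,T] → L²(Y) be a continuous curve with f(t) = f_I + ∫₀^t σ(u(s)) ds where u(s) := a(·,s) − B_{b(s)} f(s), let f̃ ∈ L²(Y), and let r : [0,T] → L²(Y) be the continuous curve solving the backward co-state equation r(t) = (f(T) − f̃) − ∫_t^T B_{b(s)ᵀ}( σ'(u(s))·r(s) ) ds. Then the stationarity condition σ'(u(s))·r(s) = 0 in L²(Y) for every s ∈ [0,T] holds if and only if f(T) = f̃ in L²(Y); i.e., the cost gradient vanishes if and only if the target f̃ is exactly reached at time T. -/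
open MeasureTheory Filter Set

noncomputable section

/-!
The gain `σ'(u(T))` has no zeros, so stationarity at the terminal time alone already forces
`r(T) = f(T) - f̃ = 0`. Conversely, `|σ'| ≤ M`, and the integral operator with the transposed kernel
is bounded on `L²` by the `L²` norm of the kernel, so a co-state with `r(T) = 0` satisfies
`‖r(t)‖ ≤ ∫_t^T M ‖b(s)‖ ‖r(s)‖ ds`. Wherever the integral of the weight `M ‖b(s)‖` over `(c, x)` is
less than `1`, this inequality carries `r = 0` from `[x, T]` over to `[c, T]`; as the weight is
integrable, such steps reach every time.
-/

open scoped ENNReal Topology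

section IntegralOperator

variable {α β 𝕜 E : Type*} [MeasurableSpace α] [RCLike 𝕜] [NormedAddCommGroup E]
  {μ : Measure α} {p q : ℝ≥0∞}

/-- The integral operator `(B_b v)(y) = ∫ b(y, z) v(z) dμ(z)` with kernel `b`, acting on functions;
the transposed kernel is `flip b`. -/
def integralOperator (b : β → α → 𝕜) (μ : Measure α) (v : α → 𝕜) (y : β) : 𝕜 :=
  ∫ z, b y z * v z ∂μ

lemma enorm_integralOperator_apply_le [ENNReal.HolderConjugate q p] {b : β → α → 𝕜} {v : α → 𝕜}
    {y : β} (hb : AEStronglyMeasurable (b y) μ) (hv : AEStronglyMeasurable v μ) :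
    ‖integralOperator b μ v y‖ₑ ≤ eLpNorm (b y) q μ * eLpNorm v p μ :=
  calc ‖integralOperator b μ v y‖ₑ ≤ ∫⁻ z, ‖b y z * v z‖ₑ ∂μ := enorm_integral_le_lintegral_enorm _
    _ = eLpNorm (b y • v) 1 μ := eLpNorm_one_eq_lintegral_enorm.symm
    _ ≤ eLpNorm (b y) q μ * eLpNorm v p μ := eLpNorm_smul_le_mul_eLpNorm hv hb

variable [MeasurableSpace β] {ν : Measure β}

lemma aestronglyMeasurable_integralOperator [SFinite μ] {b : β → α → 𝕜}
    (hb : AEStronglyMeasurable (Function.uncurry b) (ν.prod μ)) {v : α → 𝕜}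
    (hv : AEStronglyMeasurable v μ) : AEStronglyMeasurable (integralOperator b μ v) ν :=
  (hb.mul hv.comp_snd).integral_prod_right'

lemma eLpNorm_eLpNorm_eq_eLpNorm_uncurry_s16 [SFinite μ] {b : β → α → E}
    (hb : AEStronglyMeasurable (Function.uncurry b) (ν.prod μ)) (hp : p ≠ ⊤) :
    eLpNorm (fun y => eLpNorm (b y) p μ) p ν = eLpNorm (Function.uncurry b) p (ν.prod μ) := by
  rcases eq_or_ne p 0 with rfl | hp0
  · simp only [eLpNorm_exponent_zero]
  have hp' : p.toReal ≠ 0 := (ENNReal.toReal_pos hp0 hp).ne'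
  simp only [eLpNorm_eq_lintegral_rpow_enorm_toReal hp0 hp, enorm_eq_self, one_div,
    ENNReal.rpow_inv_rpow hp']
  rw [lintegral_prod _ (hb.enorm.pow_const _)]
  rfl

lemma aemeasurable_eLpNorm_section [SFinite μ] {b : β → α → E}
    (hb : AEStronglyMeasurable (Function.uncurry b) (ν.prod μ)) (hp : p ≠ ⊤) :
    AEMeasurable (fun y => eLpNorm (b y) p μ) ν := by
  rcases eq_or_ne p 0 with rfl | hp0
  · simp only [eLpNorm_exponent_zero, aemeasurable_const]
  simp only [eLpNorm_eq_lintegral_rpow_enorm_toReal hp0 hp]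
  exact (hb.enorm.pow_const _).lintegral_prod_right'.pow_const _

lemma eLpNorm_integralOperator_le [SFinite μ] [ENNReal.HolderConjugate q p] (hq : q ≠ ⊤)
    {b : β → α → 𝕜} (hb : AEStronglyMeasurable (Function.uncurry b) (ν.prod μ))
    {v : α → 𝕜} (hv : AEStronglyMeasurable v μ) :
    eLpNorm (integralOperator b μ v) q ν ≤
      eLpNorm (Function.uncurry b) q (ν.prod μ) * eLpNorm v p μ := by
  rw [← eLpNorm_eLpNorm_eq_eLpNorm_uncurry_s16 hb hq, mul_comm]
  refine eLpNorm_le_mul_eLpNorm_of_ae_le_mul'' q ?_ ?_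
  · exact (aemeasurable_eLpNorm_section hb hq).aestronglyMeasurable
  · filter_upwards [hb.prodMk_left] with y hby
    rw [mul_comm]
    exact enorm_integralOperator_apply_le hby hv

lemma eLpNorm_uncurry_flip [SFinite μ] [SFinite ν] {b : β → α → E}
    (hb : AEStronglyMeasurable (Function.uncurry b) (ν.prod μ)) :
    eLpNorm (Function.uncurry (flip b)) p (μ.prod ν) =
      eLpNorm (Function.uncurry b) p (ν.prod μ) := by
  rw [Function.uncurry_flip]
  exact eLpNorm_comp_measurePreserving hb Measure.measurePreserving_swap

end IntegralOperator

section Gronwall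

lemma tendsto_measure_Ioo_nhdsLT (μ : Measure ℝ) [IsFiniteMeasure μ] (x : ℝ) :
    Tendsto (fun y => μ (Ioo y x)) (𝓝[<] x) (𝓝 0) := by
  have inter_eq_empty : ⋂ y < x, Ioo y x = ∅ := by
    refine eq_empty_of_forall_notMem fun s hs => ?_
    have hsx : ∀ y < x, s ∈ Ioo y x := by simpa only [mem_iInter] using hs
    exact (hsx s (hsx (x - 1) (sub_one_lt x)).2).1.false
  rw [← measure_empty (μ := μ), ← inter_eq_empty]
  -- The library limit is along `𝓝[>]`, hence the order dual.
  exact tendsto_measure_biInter_gt (ι := ℝᵒᵈ) (a := OrderDual.toDual x)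
    (fun _ _ => measurableSet_Ioo.nullMeasurableSet) (fun _ _ _ hij => Ioo_subset_Ioo_left hij)
    ⟨OrderDual.toDual (x - 1), sub_one_lt x, measure_ne_top _ _⟩

variable {μ : Measure ℝ} {φ k : ℝ → ℝ≥0∞} {a b : ℝ} {C : ℝ≥0∞}

lemma exists_setLIntegral_Ioo_lt (hab : a < b) (hk : ∫⁻ s in Ioo a b, k s ∂μ ≠ ⊤) {ε : ℝ≥0∞}
    (hε : 0 < ε) : ∃ c ∈ Ioo a b, ∫⁻ s in Ioo c b, k s ∂μ < ε := by
  have := isFiniteMeasure_withDensity hk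
  obtain ⟨c, hcε, hc⟩ := (((tendsto_measure_Ioo_nhdsLT ((μ.restrict (Ioo a b)).withDensity k)
    b).eventually_lt_const hε).and (Ioo_mem_nhdsLT hab)).exists
  rw [withDensity_apply _ measurableSet_Ioo, Measure.restrict_restrict measurableSet_Ioo,
    inter_eq_left.2 (Ioo_subset_Ioo_left hc.1.le)] at hcε
  exact ⟨c, hc, hcε⟩

lemma eq_zero_of_le_setLIntegral_of_setLIntegral_Ioo_lt_one (hC : C ≠ ⊤)
    (hφC : ∀ t ∈ Icc a b, φ t ≤ C)
    (hφ : ∀ t ∈ Icc a b, φ t ≤ ∫⁻ s in Ioc t b, k s * φ s ∂μ)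
    {x : ℝ} (hx : ∀ t ∈ Icc x b, φ t = 0) (hk : ∫⁻ s in Ioo a x, k s ∂μ < 1) :
    ∀ t ∈ Icc a b, φ t = 0 := by
  set S : ℝ≥0∞ := ⨆ t ∈ Icc a b, φ t
  have le_S (t : ℝ) (ht : t ∈ Icc a b) : φ t ≤ S := le_iSup₂ (f := fun t _ => φ t) t ht
  have S_ne_top : S ≠ ⊤ := ne_top_of_le_ne_top hC (iSup₂_le hφC)
  have contraction : S ≤ (∫⁻ s in Ioo a x, k s ∂μ) * S := by
    refine iSup₂_le fun t ht => ?_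
    calc φ t ≤ ∫⁻ s in Ioc t b, k s * φ s ∂μ := hφ t ht
      _ ≤ ∫⁻ s in Ioc t b, (Ioo a x).indicator (fun s => k s * S) s ∂μ := by
          refine setLIntegral_mono' measurableSet_Ioc fun s hs => ?_
          have has : a < s := ht.1.trans_lt hs.1
          rcases lt_or_ge s x with hsx | hxs
          · rw [indicator_of_mem (mem_Ioo.2 ⟨has, hsx⟩)]
            gcongr
            exact le_S s ⟨has.le, hs.2⟩
          · simp only [hx s ⟨hxs, hs.2⟩, mul_zero, zero_le]
      _ ≤ ∫⁻ s, (Ioo a x).indicator (fun s => k s * S) s ∂μ := setLIntegral_le_lintegral _ _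
      _ = (∫⁻ s in Ioo a x, k s ∂μ) * S := by
          rw [lintegral_indicator measurableSet_Ioo, lintegral_mul_const' _ _ S_ne_top]
  have S_eq_zero : S = 0 := by
    by_contra hS
    exact contraction.not_gt ((ENNReal.mul_lt_mul_left hS S_ne_top hk).trans_eq (one_mul S))
  exact fun t ht => le_zero_iff.1 ((le_S t ht).trans_eq S_eq_zero)

lemma exists_mem_Ico_forall_Icc_eq_zero_of_le_setLIntegral
    (hk : ∫⁻ s in Ioc a b, k s ∂μ ≠ ⊤) (hC : C ≠ ⊤) (hφC : ∀ t ∈ Icc a b, φ t ≤ C)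
    (hφ : ∀ t ∈ Icc a b, φ t ≤ ∫⁻ s in Ioc t b, k s * φ s ∂μ)
    {x y : ℝ} (hx : x ∈ Ioc a b) (hx0 : ∀ t ∈ Icc x b, φ t = 0) (hyx : y < x) :
    ∃ c ∈ Ico y x, ∀ t ∈ Icc c b, φ t = 0 := by
  have hk' : ∫⁻ s in Ioo (max a y) x, k s ∂μ ≠ ⊤ :=
    ne_top_of_le_ne_top hk <| lintegral_mono_set <|
      (Ioo_subset_Ioo (le_max_left a y) hx.2).trans Ioo_subset_Ioc_self
  obtain ⟨c, ⟨hc, hcx⟩, hkc⟩ := exists_setLIntegral_Ioo_lt (max_lt hx.1 hyx) hk' one_pos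
  have hcab : Icc c b ⊆ Icc a b := Icc_subset_Icc_left ((le_max_left a y).trans hc.le)
  exact ⟨c, ⟨(le_max_right a y).trans hc.le, hcx⟩,
    eq_zero_of_le_setLIntegral_of_setLIntegral_Ioo_lt_one hC (fun t ht => hφC t (hcab ht))
      (fun t ht => hφ t (hcab ht)) hx0 hkc⟩

lemma eq_zero_of_le_setLIntegral_Ioc (hk : ∫⁻ s in Ioc a b, k s ∂μ ≠ ⊤) (hC : C ≠ ⊤)
    (hφC : ∀ t ∈ Icc a b, φ t ≤ C)
    (hφ : ∀ t ∈ Icc a b, φ t ≤ ∫⁻ s in Ioc t b, k s * φ s ∂μ) :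
    ∀ t ∈ Icc a b, φ t = 0 := by
  set Z : Set ℝ := {x | ∀ t ∈ Icc x b, φ t = 0}
  have eq_zero_of_forall_Ioc (x : ℝ) (hx : x ∈ Icc a b) (h : ∀ t ∈ Ioc x b, φ t = 0) :
      φ x = 0 := by
    refine le_zero_iff.1 ((hφ x hx).trans_eq ?_)
    exact setLIntegral_eq_zero measurableSet_Ioc fun s hs => mul_eq_zero_of_right (k s) (h s hs)
  have isClosed_Z : IsClosed (Z ∩ Icc a b) := by
    refine isClosed_of_closure_subset fun x hx => ?_
    have hxab : x ∈ Icc a b := closure_minimal inter_subset_right isClosed_Icc hx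
    have hIoc (t : ℝ) (ht : t ∈ Ioc x b) : φ t = 0 := by
      obtain ⟨y, hyt, hyZ, -⟩ := mem_closure_iff.1 hx (Iio t) isOpen_Iio ht.1
      exact hyZ t ⟨le_of_lt hyt, ht.2⟩
    refine ⟨fun t ht => ?_, hxab⟩
    rcases ht.1.eq_or_lt with rfl | hxt
    · exact eq_zero_of_forall_Ioc x hxab hIoc
    · exact hIoc t ⟨hxt, ht.2⟩
  have reach_left : ∀ x ∈ Z ∩ Ioc a b, ∀ y ∈ Iio x, (Z ∩ Ico y x).Nonempty := by
    rintro x ⟨hxZ, hx⟩ y hyx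
    obtain ⟨c, hc, hcZ⟩ := exists_mem_Ico_forall_Icc_eq_zero_of_le_setLIntegral
      hk hC hφC hφ hx hxZ hyx
    exact ⟨c, hcZ, hc⟩
  have b_mem_Z (hab : a ≤ b) : b ∈ Z := by
    intro t ht
    obtain rfl : t = b := le_antisymm ht.2 ht.1
    exact eq_zero_of_forall_Ioc t ⟨hab, le_rfl⟩ fun s hs => absurd hs.1 hs.2.not_gt
  intro t ht
  exact isClosed_Z.Icc_subset_of_forall_exists_lt (b_mem_Z (ht.1.trans ht.2)) reach_left ht t
    ⟨le_rfl, ht.2⟩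

end Gronwall

section Costate

variable {α 𝕜 : Type*} [MeasurableSpace α] [RCLike 𝕜] {μ : Measure α}
  {b : ℝ → α → α → 𝕜} {w : ℝ → α → 𝕜} {t₀ T M : ℝ} {r R : ℝ → Lp 𝕜 2 μ}

/-- `r` is a continuous solution of the backward co-state equation
`r(t) = r(T) - ∫_t^T B_{b(s)ᵀ} (w(s) r(s)) ds` on `[t₀, T]`. The gain `w(s)` stands for `σ'(u(s))`,
and `R(s)` is the integrand regarded as an element of `L²`. -/
structure IsBackwardCostate (b : ℝ → α → α → 𝕜) (w : ℝ → α → 𝕜) (t₀ T : ℝ)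
    (r R : ℝ → Lp 𝕜 2 μ) : Prop where
  continuousOn : ContinuousOn r (Icc t₀ T)
  integrand_ae_eq : ∀ s ∈ Icc t₀ T,
    R s =ᵐ[μ] integralOperator (flip (b s)) μ fun y => w s y * r s y
  eq_sub_integral : ∀ t ∈ Icc t₀ T, r t = r T - ∫ s in Ioc t T, R s

namespace IsBackwardCostate

lemma enorm_integrand_le [SFinite μ] (h : IsBackwardCostate b w t₀ T r R) {s : ℝ}
    (hs : s ∈ Icc t₀ T) (hb : AEStronglyMeasurable (Function.uncurry (b s)) (μ.prod μ))
    (hw : AEStronglyMeasurable (w s) μ) (hwM : ∀ᵐ y ∂μ, ‖w s y‖ ≤ M) :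
    ‖R s‖ₑ ≤ ENNReal.ofReal M * eLpNorm (Function.uncurry (b s)) 2 (μ.prod μ) * ‖r s‖ₑ := by
  have gain_le : eLpNorm (fun y => w s y * r s y) 2 μ ≤ ENNReal.ofReal M * eLpNorm (r s) 2 μ := by
    refine eLpNorm_le_mul_eLpNorm_of_ae_le_mul ?_ 2
    filter_upwards [hwM] with y hy
    rw [norm_mul]
    gcongr
  calc ‖R s‖ₑ = eLpNorm (integralOperator (flip (b s)) μ fun y => w s y * r s y) 2 μ := by
        rw [Lp.enorm_def, eLpNorm_congr_ae (h.integrand_ae_eq s hs)]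
    _ ≤ eLpNorm (Function.uncurry (flip (b s))) 2 (μ.prod μ) *
          eLpNorm (fun y => w s y * r s y) 2 μ :=
        eLpNorm_integralOperator_le ENNReal.ofNat_ne_top hb.prod_swap
          (hw.mul (Lp.aestronglyMeasurable (r s)))
    _ ≤ eLpNorm (Function.uncurry (b s)) 2 (μ.prod μ) *
          (ENNReal.ofReal M * eLpNorm (r s) 2 μ) := by
        rw [eLpNorm_uncurry_flip hb]
        gcongr
    _ = ENNReal.ofReal M * eLpNorm (Function.uncurry (b s)) 2 (μ.prod μ) * ‖r s‖ₑ := by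
        rw [Lp.enorm_def]
        ring

lemma eq_zero_of_terminal_eq_zero [SFinite μ] (h : IsBackwardCostate b w t₀ T r R)
    (hb : ∀ s ∈ Icc t₀ T, AEStronglyMeasurable (Function.uncurry (b s)) (μ.prod μ))
    (hb_int : ∫⁻ s in Ioc t₀ T, eLpNorm (Function.uncurry (b s)) 2 (μ.prod μ) ≠ ⊤)
    (hw : ∀ s ∈ Icc t₀ T, AEStronglyMeasurable (w s) μ)
    (hwM : ∀ s ∈ Icc t₀ T, ∀ᵐ y ∂μ, ‖w s y‖ ≤ M) (hrT : r T = 0) :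
    ∀ t ∈ Icc t₀ T, r t = 0 := by
  obtain ⟨C, hC⟩ := isCompact_Icc.exists_bound_of_continuousOn h.continuousOn
  set k : ℝ → ℝ≥0∞ := fun s =>
    ENNReal.ofReal M * eLpNorm (Function.uncurry (b s)) 2 (μ.prod μ)
  have hk : ∫⁻ s in Ioc t₀ T, k s ≠ ⊤ := by
    rw [lintegral_const_mul' _ _ ENNReal.ofReal_ne_top]
    exact ENNReal.mul_ne_top ENNReal.ofReal_ne_top hb_int
  have gronwall (t : ℝ) (ht : t ∈ Icc t₀ T) : ‖r t‖ₑ ≤ ∫⁻ s in Ioc t T, k s * ‖r s‖ₑ :=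
    calc ‖r t‖ₑ = ‖∫ s in Ioc t T, R s‖ₑ := by
          rw [h.eq_sub_integral t ht, hrT, zero_sub, enorm_neg]
      _ ≤ ∫⁻ s in Ioc t T, ‖R s‖ₑ := enorm_integral_le_lintegral_enorm _
      _ ≤ ∫⁻ s in Ioc t T, k s * ‖r s‖ₑ := by
          refine setLIntegral_mono' measurableSet_Ioc fun s hs => ?_
          have hs' : s ∈ Icc t₀ T := ⟨ht.1.trans hs.1.le, hs.2⟩
          exact h.enorm_integrand_le hs' (hb s hs') (hw s hs') (hwM s hs')
  have norm_bound (t : ℝ) (ht : t ∈ Icc t₀ T) : ‖r t‖ₑ ≤ ENNReal.ofReal C := by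
    rw [← ofReal_norm]
    exact ENNReal.ofReal_le_ofReal (hC t ht)
  exact fun t ht => enorm_eq_zero.1 <|
    eq_zero_of_le_setLIntegral_Ioc hk ENNReal.ofReal_ne_top norm_bound gronwall t ht

end IsBackwardCostate

end Costate

theorem stationarity_iff_target_reached_general {α 𝕜 : Type*} [MeasurableSpace α] [RCLike 𝕜]
    {μ : Measure α} [SFinite μ] {b : ℝ → α → α → 𝕜} {w : ℝ → α → 𝕜} {t₀ T M : ℝ} (hT : t₀ ≤ T)
    (hb : ∀ s ∈ Icc t₀ T, AEStronglyMeasurable (Function.uncurry (b s)) (μ.prod μ))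
    (hb_int : ∫⁻ s in Ioc t₀ T, eLpNorm (Function.uncurry (b s)) 2 (μ.prod μ) ≠ ⊤)
    (hw : ∀ s ∈ Icc t₀ T, AEStronglyMeasurable (w s) μ)
    (hwM : ∀ s ∈ Icc t₀ T, ∀ᵐ y ∂μ, ‖w s y‖ ≤ M) (hwT : ∀ᵐ y ∂μ, w T y ≠ 0)
    {r R : ℝ → Lp 𝕜 2 μ} (hr : IsBackwardCostate b w t₀ T r R)
    {fT ftilde : Lp 𝕜 2 μ} (hrT : r T = fT - ftilde) :
    (∀ s ∈ Icc t₀ T, (fun y => w s y * r s y) =ᵐ[μ] 0) ↔ fT = ftilde := by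
  rw [← sub_eq_zero, ← hrT]
  constructor
  · intro stationary
    rw [Lp.eq_zero_iff_ae_eq_zero]
    filter_upwards [stationary T (right_mem_Icc.2 hT), hwT] with y hy hwy
    exact (mul_eq_zero.1 hy).resolve_left hwy
  · intro terminal_eq_zero s hs
    rw [hr.eq_zero_of_terminal_eq_zero hb hb_int hw hwM terminal_eq_zero s hs]
    filter_upwards [Lp.coeFn_zero 𝕜 2 μ] with y hy
    exact mul_eq_zero_of_right _ hy

/-- For an activation with `σ' > 0`, the stationarity condition `σ'(u(s)) r(s) = 0`
in `L²(Y)` for every `s ∈ [0,T]` (vanishing of the cost gradient) holds if and only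
if the target is exactly reached: `f(T) = f̃` in `L²(Y)`. Here `r` solves the
backward co-state equation with terminal value `f(T) - f̃`. -/
theorem stationarity_iff_target_reached {n : ℕ} (Y : Set (Fin n → ℝ))
    (hY : MeasurableSet Y)
    (σ : ℝ → ℝ) (hσC1 : ContDiff ℝ 1 σ) (M : ℝ) (hσ' : ∀ s, |deriv σ s| ≤ M)
    (hσ0 : σ 0 = 0) (hσ'pos : ∀ s, 0 < deriv σ s)
    (T : ℝ) (hT : 0 < T)
    (a : ℝ → (Fin n → ℝ) → ℝ) (ha_meas : Measurable (Function.uncurry a))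
    (ha_int : ∫⁻ t in Ioc (0:ℝ) T, eLpNorm (a t) 2 (μY Y) < ⊤)
    (b : ℝ → (Fin n → ℝ) → (Fin n → ℝ) → ℝ)
    (hb_meas : Measurable fun p : ℝ × ((Fin n → ℝ) × (Fin n → ℝ)) => b p.1 p.2.1 p.2.2)
    (hb_int : ∫⁻ t in Ioc (0:ℝ) T,
      eLpNorm (fun q : (Fin n → ℝ) × (Fin n → ℝ) => b t q.1 q.2) 2 ((μY Y).prod (μY Y)) < ⊤)
    (fI : Lp ℝ 2 (μY Y))
    (f F : ℝ → Lp ℝ 2 (μY Y))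
    (hf_cont : ContinuousOn f (Icc 0 T))
    (hF : ∀ s ∈ Icc (0:ℝ) T,
      ⇑(F s) =ᵐ[μY Y] fun y => σ (a s y - ∫ z, b s y z * f s z ∂(μY Y)))
    (hf : ∀ t ∈ Icc (0:ℝ) T, f t = fI + ∫ s in Ioc (0:ℝ) t, F s)
    (ftilde : Lp ℝ 2 (μY Y))
    (r R : ℝ → Lp ℝ 2 (μY Y))
    (hr_cont : ContinuousOn r (Icc 0 T))
    (hrT : r T = f T - ftilde)
    (hR : ∀ s ∈ Icc (0:ℝ) T,
      ⇑(R s) =ᵐ[μY Y] fun y =>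
        ∫ z, b s z y * (deriv σ (a s z - ∫ w, b s z w * f s w ∂(μY Y)) * r s z) ∂(μY Y))
    (hr : ∀ t ∈ Icc (0:ℝ) T, r t = r T - ∫ s in Ioc t T, R s) :
    (∀ s ∈ Icc (0:ℝ) T,
      (fun y => deriv σ (a s y - ∫ z, b s y z * f s z ∂(μY Y)) * r s y)
        =ᵐ[μY Y] 0) ↔ f T = ftilde := by
  have hb (s : ℝ) : AEStronglyMeasurable (Function.uncurry (b s)) ((μY Y).prod (μY Y)) :=
    (hb_meas.comp measurable_prodMk_left).aestronglyMeasurable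
  exact stationarity_iff_target_reached_general hT.le (fun s _ => hb s) hb_int.ne
    (fun s _ => (hσC1.continuous_deriv le_rfl).comp_aestronglyMeasurable
      ((ha_meas.comp measurable_prodMk_left).aestronglyMeasurable.sub
        (aestronglyMeasurable_integralOperator (hb s) (Lp.aestronglyMeasurable (f s)))))
    (fun _ _ => ae_of_all _ fun _ => hσ' _) (ae_of_all _ fun _ => (hσ'pos _).ne')
    ⟨hr_cont, hR, hr⟩ hrT
end
end
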